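/- Let p be a prime, r ≥ 1, and let C be a free convolutional code of length n and rank k over ℤ/p^r with dual code C⊥ (the set of length-n vectors of Laurent series orthogonal to every codeword of C under the standard bilinear form). Let G be a k × n Reduced Internal Degree Matrix encoder of C and H an (n−k) × n Reduced Internal Degree Matrix encoder of C⊥ (so in particular G·Hᵀ = 0 and both have full row rank). Then the monic greatest common divisor in 𝔽_p[D] of the k × k minors of the reduction of G modulo p equals the monic greatest common divisor in 𝔽_p[D] of the (n−k) × (n−k) minors of the reduction of H modulo p; that is, Δ_p(C) = Δ_p(C⊥). -/

import Mathlib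

open Polynomial Matrix

/-- The natural ring homomorphism from polynomials over a commutative ring to Laurent series. -/
noncomputable def polyToLS (R : Type*) [CommRing R] : Polynomial R →+* LaurentSeries R :=
  (HahnSeries.ofPowerSeries ℤ R).comp Polynomial.coeToPowerSeries.ringHom

/-- The `k × k` minor of a `k × n` matrix determined by a choice of columns. -/
noncomputable def minorOn {R : Type*} [CommRing R] {k n : ℕ}
    (G : Matrix (Fin k) (Fin n) R) (c : Fin k → Fin n) : R :=
  (G.submatrix id c).det

/-- A polynomial matrix has full row rank if some maximal minor is a non-zero-divisor. -/
def FullRowRank {R : Type*} [CommRing R] {k n : ℕ}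
    (G : Matrix (Fin k) (Fin n) (Polynomial R)) : Prop :=
  ∃ c : Fin k → Fin n, minorOn G c ∈ nonZeroDivisors (Polynomial R)

/-- The free convolutional code (row span over the Laurent series ring) generated by `G`. -/
noncomputable def code {R : Type*} [CommRing R] {k n : ℕ}
    (G : Matrix (Fin k) (Fin n) (Polynomial R)) : Set (Fin n → LaurentSeries R) :=
  {v | ∃ u : Fin k → LaurentSeries R, v = Matrix.vecMul u (G.map (polyToLS R))}

/-- The internal degree of a polynomial matrix: the maximal degree of its maximal minors. -/
noncomputable def intdeg {R : Type*} [CommRing R] {k n : ℕ}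
    (G : Matrix (Fin k) (Fin n) (Polynomial R)) : WithBot ℕ :=
  Finset.univ.sup fun c : Fin k → Fin n => (minorOn G c).degree

/-- Coefficientwise/entrywise reduction modulo `p` of a matrix over `(ℤ/p^r)[D]`. -/
noncomputable def reduceMod (p r : ℕ) (hr : r ≠ 0) {k n : ℕ}
    (G : Matrix (Fin k) (Fin n) (Polynomial (ZMod (p ^ r)))) :
    Matrix (Fin k) (Fin n) (Polynomial (ZMod p)) :=
  G.map (Polynomial.map (ZMod.castHom (dvd_pow_self p hr) (ZMod p)))

/-- The monic greatest common divisor in `𝔽_p[D]` of the maximal minors of a matrix. -/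
noncomputable def gcdMinors {p : ℕ} [Fact p.Prime] {k n : ℕ}
    (G : Matrix (Fin k) (Fin n) (Polynomial (ZMod p))) : Polynomial (ZMod p) :=
  Finset.univ.gcd fun c : Fin k → Fin n => minorOn G c

/-- A vector of Laurent series has finite Hamming weight iff each component has
finitely many nonzero coefficients. -/
def FiniteWeight {R : Type*} [CommRing R] {m : ℕ} (v : Fin m → LaurentSeries R) : Prop :=
  ∀ i, (v i).support.Finite

/-- A polynomial generator matrix is non-catastrophic if every input whose output has finite
Hamming weight itself has finite Hamming weight. -/
noncomputable def NonCatastrophic {R : Type*} [CommRing R] {k n : ℕ}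
    (G : Matrix (Fin k) (Fin n) (Polynomial R)) : Prop :=
  ∀ u : Fin k → LaurentSeries R,
    FiniteWeight (Matrix.vecMul u (G.map (polyToLS R))) → FiniteWeight u

/-- The dual of a set of words: all vectors orthogonal to every word. -/
def dualCode {R : Type*} [CommRing R] {n : ℕ}
    (C : Set (Fin n → LaurentSeries R)) : Set (Fin n → LaurentSeries R) :=
  {v | ∀ w ∈ C, ∑ i, v i * w i = 0}



/-! ### Generic linear algebra -/

theorem minorOn_mul {R : Type*} [CommRing R] {k n : ℕ} (A : Matrix (Fin k) (Fin k) R)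
    (G : Matrix (Fin k) (Fin n) R) (c : Fin k → Fin n) :
    minorOn (A * G) c = A.det * minorOn G c := by
  unfold minorOn
  rw [← Matrix.det_mul]
  congr 1

theorem minorOn_smul {R : Type*} [CommRing R] {k n : ℕ} (a : R)
    (G : Matrix (Fin k) (Fin n) R) (c : Fin k → Fin n) :
    minorOn (a • G) c = a ^ k * minorOn G c := by
  unfold minorOn
  have : (a • G).submatrix id c = a • G.submatrix id c := rfl
  rw [this, Matrix.det_smul, Fintype.card_fin]

theorem minorOn_map {R S : Type*} [CommRing R] [CommRing S] {k n : ℕ} (f : R →+* S)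
    (G : Matrix (Fin k) (Fin n) R) (c : Fin k → Fin n) :
    minorOn (G.map f) c = f (minorOn G c) := by
  unfold minorOn
  rw [RingHom.map_det]
  rfl

theorem minorOn_eq_zero_of_not_injective {R : Type*} [CommRing R] {k n : ℕ}
    (G : Matrix (Fin k) (Fin n) R) (c : Fin k → Fin n) (hc : ¬ Function.Injective c) :
    minorOn G c = 0 := by
  unfold Function.Injective at hc
  push Not at hc
  obtain ⟨i, j, hij, hne⟩ := hc
  exact Matrix.det_zero_of_column_eq hne (fun x => by simp [hij])

/-- Complementary columns. -/
theorem exists_equiv_of_injective {k l n : ℕ} (hkl : k + l = n) (c : Fin k → Fin n)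
    (hc : Function.Injective c) :
    ∃ e : Fin k ⊕ Fin l ≃ Fin n, ∀ i, e (Sum.inl i) = c i := by
  classical
  have hcard : Fintype.card (Fin l) = Fintype.card ((Set.range c)ᶜ : Set (Fin n)) := by
    rw [Fintype.card_compl_set, Set.card_range_of_injective hc]
    simp; omega
  let e2 := Fintype.equivOfCardEq hcard
  exact ⟨(Equiv.sumCongr (Equiv.ofInjective c hc) e2).trans (Equiv.Set.sumCompl (Set.range c)),
    fun i => by simp⟩

/-- The stack of `G` on the coordinate rows. -/
theorem dual_minors {R : Type*} [CommRing R] {k l n : ℕ}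
    (G : Matrix (Fin k) (Fin n) R) (H : Matrix (Fin l) (Fin n) R) (hGH : G * Hᵀ = 0)
    (e d : Fin k ⊕ Fin l ≃ Fin n) :
    ∃ ε : ℤˣ, minorOn G (e ∘ Sum.inl) * minorOn H (d ∘ Sum.inr)
      = ((ε : ℤ) : R) * (minorOn G (d ∘ Sum.inl) * minorOn H (e ∘ Sum.inr)) := by
  classical
  let M : Matrix (Fin k ⊕ Fin l) (Fin n) R :=
    Matrix.fromRows G ((1 : Matrix (Fin n) (Fin n) R).submatrix (e ∘ Sum.inr) id)
  let Z : Matrix (Fin n) (Fin k ⊕ Fin l) R :=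
    Matrix.fromCols ((1 : Matrix (Fin n) (Fin n) R).submatrix id (d ∘ Sum.inl)) Hᵀ
  have h1 : (M.submatrix id e).det = minorOn G (e ∘ Sum.inl) := by
    have : M.submatrix id e = Matrix.fromBlocks (G.submatrix id (e ∘ Sum.inl))
        (G.submatrix id (e ∘ Sum.inr)) 0 1 := by
      ext i j
      rcases i with i | i <;> rcases j with j | j <;>
        simp [M, Matrix.one_apply]
    rw [this, Matrix.det_fromBlocks_zero₂₁]
    simp [minorOn]
  have h2 : (Z.submatrix d id).det = minorOn H (d ∘ Sum.inr) := by
    have : Z.submatrix d id = Matrix.fromBlocks 1 ((H.submatrix id (d ∘ Sum.inl))ᵀ)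
        0 ((H.submatrix id (d ∘ Sum.inr))ᵀ) := by
      ext i j
      rcases i with i | i <;> rcases j with j | j <;>
        simp [Z, Matrix.one_apply]
    rw [this, Matrix.det_fromBlocks_zero₂₁, Matrix.det_transpose]
    simp [minorOn]
  have h3 : (M * Z).det = minorOn G (d ∘ Sum.inl) * minorOn H (e ∘ Sum.inr) := by
    have : M * Z = Matrix.fromBlocks (G.submatrix id (d ∘ Sum.inl)) 0
        ((1 : Matrix (Fin n) (Fin n) R).submatrix (e ∘ Sum.inr) (d ∘ Sum.inl))
        ((H.submatrix id (e ∘ Sum.inr))ᵀ) := by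
      rw [Matrix.fromRows_mul_fromCols, hGH]
      congr 1
      · ext i j; simp [Matrix.mul_apply, Matrix.one_apply]
      · ext i j; simp [Matrix.mul_apply, Matrix.one_apply]
      · ext i j; simp [Matrix.mul_apply, Matrix.one_apply]
    rw [this, Matrix.det_fromBlocks_zero₁₂, Matrix.det_transpose]
    rfl
  have h4 : M * Z = M.submatrix id e * Z.submatrix e id := by
    rw [Matrix.submatrix_mul_equiv]; rfl
  have h5 : (Z.submatrix d id).det
      = ((Equiv.Perm.sign (d.trans e.symm) : ℤ) : R) * (Z.submatrix e id).det := by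
    rw [← Matrix.det_permute]
    congr 1
    ext i j
    simp
  refine ⟨Equiv.Perm.sign (d.trans e.symm), ?_⟩
  rw [← h1, ← h2, ← h3, h4, Matrix.det_mul, h5]
  ring

/-- A matrix over a domain all of whose maximal minors vanish has dependent rows. -/
theorem exists_vecMul_eq_zero_of_minors {R : Type*} [CommRing R] [IsDomain R] {l n : ℕ}
    (H : Matrix (Fin l) (Fin n) R) (h : ∀ c, minorOn H c = 0) :
    ∃ y : Fin l → R, y ≠ 0 ∧ y ᵥ* H = 0 := by
  classical
  by_contra hcon
  push Not at hcon
  let F := FractionRing R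
  have hli : LinearIndependent R H.row := by
    rw [← Matrix.vecMul_injective_iff]
    intro x y hxy
    by_contra hne
    exact hcon (x - y) (sub_ne_zero.2 hne) (by rw [Matrix.sub_vecMul]; exact sub_eq_zero.2 hxy)
  let HF := H.map (algebraMap R F)
  have hliF : LinearIndependent F HF.row := by
    rw [← Matrix.vecMul_injective_iff]
    intro x y hxy
    by_contra hne
    obtain ⟨b, hb⟩ := IsLocalization.exist_integer_multiples_of_finite
      (nonZeroDivisors R) (fun i => x i - y i)
    choose z hz using hb
    refine hcon z ?_ ?_
    · rintro rfl
      apply hne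
      ext i
      have := hz i
      simp only [Pi.zero_apply, map_zero] at this
      have h0 : (algebraMap R F b) * (x i - y i) = 0 := by
        rw [this, Algebra.smul_def]
      rcases mul_eq_zero.1 h0 with h0 | h0
      · exact absurd h0 (IsLocalization.map_units F b).ne_zero
      · exact sub_eq_zero.1 h0
    · have hxy' : (x - y) ᵥ* HF = 0 := by rw [Matrix.sub_vecMul]; exact sub_eq_zero.2 hxy
      ext j
      apply IsFractionRing.injective R F
      have h1 := congrFun hxy' j
      simp only [Matrix.vecMul, dotProduct, map_sum, map_mul, Pi.zero_apply, map_zero] at h1 ⊢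
      have : ∀ i, algebraMap R F (z i) * algebraMap R F (H i j)
          = algebraMap R F b * ((x - y) i * HF i j) := by
        intro i
        rw [hz i, Algebra.smul_def]
        simp [HF]
        ring
      rw [Finset.sum_congr rfl (fun i _ => this i), ← Finset.mul_sum, h1, mul_zero]
  have hrank : HF.rank = l := by
    rw [LinearIndependent.rank_matrix hliF, Fintype.card_fin]
  rw [Matrix.rank_eq_finrank_span_cols] at hrank
  obtain ⟨f, hf1, hf2, hf3⟩ := Submodule.exists_fun_fin_finrank_span_eq F (Set.range HF.col)
  choose g hg using hf1
  let c : Fin l → Fin n := fun i => g (Fin.cast hrank.symm i)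
  have hc : LinearIndependent F (HF.submatrix id c).col := by
    have : (HF.submatrix id c).col = f ∘ (Fin.cast hrank.symm) := by
      funext i
      simp only [Function.comp, ← hg]
      rfl
    rw [this]
    exact hf3.comp _ (Fin.cast_injective _)
  rw [Matrix.linearIndependent_cols_iff_isUnit, Matrix.isUnit_iff_isUnit_det] at hc
  have h0 : minorOn HF c = 0 := by
    rw [minorOn_map, h c, map_zero]
  exact hc.ne_zero h0

/-! ### Generators of lattices -/

theorem exists_fin_span_pid {K : Type*} [CommRing K] [IsDomain K] [IsPrincipalIdealRing K] {l : ℕ}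
    (P : Submodule K (Fin l → K)) :
    ∃ x : Fin l → (Fin l → K), (∀ i, x i ∈ P) ∧ ∀ z ∈ P, ∃ c : Fin l → K, z = ∑ i, c i • x i := by
  obtain ⟨m, ⟨b⟩⟩ := P.nonempty_basis_of_pid (Pi.basisFun K (Fin l))
  have hm : m ≤ l := by
    have h1 : LinearIndependent K (fun i => (b i : Fin l → K)) :=
      b.linearIndependent.map' P.subtype (Submodule.ker_subtype P)
    simpa using h1.fintype_card_le_finrank
  obtain ⟨t, rfl⟩ := Nat.exists_eq_add_of_le hm
  refine ⟨fun i => Fin.addCases (fun j => (b j : Fin (m + t) → K)) (fun _ => 0) i, ?_, ?_⟩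
  · intro i
    refine Fin.addCases (fun j => ?_) (fun j => ?_) i <;> simp
  · intro z hz
    refine ⟨fun i => Fin.addCases (fun j => b.repr ⟨z, hz⟩ j) (fun _ => 0) i, ?_⟩
    rw [Fin.sum_univ_add]
    simp only [Fin.addCases_left, Fin.addCases_right, smul_zero, Finset.sum_const_zero, add_zero]
    have := congrArg P.subtype (b.sum_repr ⟨z, hz⟩)
    rw [map_sum] at this
    exact this.symm

theorem exists_generators {S K : Type*} [CommRing S] [IsNoetherianRing S] [CommRing K]
    [IsDomain K] [IsPrincipalIdealRing K] (ρ : S →+* K) (hρ : Function.Surjective ρ) (π : S)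
    (hπ0 : ρ π = 0) {l n : ℕ} (N : Submodule S (Fin n → S))
    (d : Fin l → Fin n)
    (hN : ∀ w ∈ N, (∀ j, ρ (w (d j)) = 0) → ∃ w' ∈ N, w = π • w') :
    ∃ V : Matrix (Fin l) (Fin n) S, (∀ i, V i ∈ N) ∧
      ∃ e : S, ρ e = 1 ∧ ∀ w ∈ N, ∃ y : Fin l → S, e • w = y ᵥ* V := by
  let P : Submodule K (Fin l → K) :=
    { carrier := {x | ∃ w ∈ N, ∀ j, x j = ρ (w (d j))}
      add_mem' := by
        rintro x y ⟨w, hw, hx⟩ ⟨w', hw', hy⟩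
        exact ⟨w + w', N.add_mem hw hw', fun j => by simp [hx, hy]⟩
      zero_mem' := ⟨0, N.zero_mem, fun j => by simp⟩
      smul_mem' := by
        rintro c x ⟨w, hw, hx⟩
        obtain ⟨c, rfl⟩ := hρ c
        exact ⟨c • w, N.smul_mem _ hw, fun j => by simp [hx]⟩ }
  obtain ⟨x, hxP, hx⟩ := exists_fin_span_pid P
  choose V hV hxV using hxP
  have key : ∀ w ∈ N, ∃ y : Fin l → S, ∃ w' ∈ N, w = y ᵥ* (Matrix.of V) + π • w' := by
    intro w hw
    obtain ⟨c, hc⟩ := hx (fun j => ρ (w (d j))) ⟨w, hw, fun j => rfl⟩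
    choose y hy using fun i => hρ (c i)
    have hyV : y ᵥ* (Matrix.of V) = ∑ i, y i • V i := by
      rw [Matrix.vecMul_eq_sum]; rfl
    have hmem : w - y ᵥ* (Matrix.of V) ∈ N := by
      rw [hyV]
      exact N.sub_mem hw (N.sum_mem fun i _ => N.smul_mem _ (hV i))
    obtain ⟨w', hw', h⟩ := hN _ hmem (by
      intro j
      have h1 := congrFun hc j
      simp only [Finset.sum_apply, Pi.smul_apply, smul_eq_mul] at h1
      rw [hyV]
      simp [h1, hxV, hy])
    exact ⟨y, w', hw', by rw [← h]; abel⟩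
  refine ⟨Matrix.of V, hV, ?_⟩
  have hle : N ≤ Submodule.span S (Set.range V) ⊔ (Ideal.span {π}) • N := by
    intro w hw
    obtain ⟨y, w', hw', rfl⟩ := key w hw
    refine Submodule.add_mem_sup ?_ ?_
    · rw [Matrix.vecMul_eq_sum]
      exact Submodule.sum_mem _ fun i _ =>
        Submodule.smul_mem _ _ (Submodule.subset_span ⟨i, rfl⟩)
    · exact Submodule.smul_mem_smul (Ideal.mem_span_singleton_self π) hw'
  obtain ⟨e, he, hle⟩ := Submodule.exists_sub_one_mem_and_smul_le_of_fg_of_le_sup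
    (IsNoetherian.noetherian N) le_rfl hle
  refine ⟨e, ?_, ?_⟩
  · obtain ⟨t, ht⟩ := Ideal.mem_span_singleton'.1 he
    have := congrArg ρ ht
    rw [map_mul, hπ0, mul_zero, map_sub, map_one] at this
    exact (sub_eq_zero.1 this.symm)
  · intro w hw
    have h1 := hle (Submodule.smul_mem_pointwise_smul w e N hw)
    rw [Submodule.mem_span_range_iff_exists_fun] at h1
    obtain ⟨c, hc⟩ := h1
    exact ⟨c, by rw [← hc, Matrix.vecMul_eq_sum]; rfl⟩

/-! ### The coefficient rings -/

/-- Reduction modulo `p` of polynomials over `ℤ/p^r`. -/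
noncomputable abbrev redPoly (p r : ℕ) (hr : r ≠ 0) :
    Polynomial (ZMod (p ^ r)) →+* Polynomial (ZMod p) :=
  Polynomial.mapRingHom (ZMod.castHom (dvd_pow_self p hr) (ZMod p))

theorem reduceMod_eq (p r : ℕ) (hr : r ≠ 0) {k n : ℕ}
    (G : Matrix (Fin k) (Fin n) (Polynomial (ZMod (p ^ r)))) :
    reduceMod p r hr G = G.map (redPoly p r hr) := rfl

theorem redPoly_surjective (p r : ℕ) (hr : r ≠ 0) : Function.Surjective (redPoly p r hr) :=
  Polynomial.map_surjective _ (ZMod.castHom_surjective _)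

theorem castHom_eq_zero (p r : ℕ) [Fact p.Prime] (hr : r ≠ 0) (x : ZMod (p ^ r))
    (hx : ZMod.castHom (dvd_pow_self p hr) (ZMod p) x = 0) : (p : ZMod (p ^ r)) ∣ x := by
  obtain ⟨a, rfl⟩ := ZMod.natCast_zmod_surjective x
  rw [map_natCast, ZMod.natCast_eq_zero_iff] at hx
  exact_mod_cast Nat.cast_dvd_cast hx

theorem redPoly_eq_zero (p r : ℕ) [Fact p.Prime] (hr : r ≠ 0) (x : Polynomial (ZMod (p ^ r)))
    (hx : redPoly p r hr x = 0) : ∃ z, x = C (p : ZMod (p ^ r)) * z := by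
  have : C (p : ZMod (p ^ r)) ∣ x := by
    rw [Polynomial.C_dvd_iff_dvd_coeff]
    intro i
    apply castHom_eq_zero p r hr
    have := congrArg (fun f => Polynomial.coeff f i) hx
    simpa [Polynomial.coeff_map] using this
  exact this

theorem redPoly_p (p r : ℕ) [Fact p.Prime] (hr : r ≠ 0) :
    redPoly p r hr (C (p : ZMod (p ^ r))) = 0 := by
  simp

theorem C_p_nilpotent (p r : ℕ) : (C (p : ZMod (p ^ r))) ^ r = 0 := by
  rw [← C_pow, ← Nat.cast_pow, ZMod.natCast_self, C_0]

theorem isNilpotent_of_red (p r : ℕ) [Fact p.Prime] (hr : r ≠ 0) (x : Polynomial (ZMod (p ^ r)))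
    (hx : redPoly p r hr x = 0) : IsNilpotent x := by
  obtain ⟨z, rfl⟩ := redPoly_eq_zero p r hr x hx
  exact ⟨r, by rw [mul_pow, C_p_nilpotent, zero_mul]⟩

theorem isUnit_of_red (p r : ℕ) [Fact p.Prime] (hr : r ≠ 0) (x : Polynomial (ZMod (p ^ r)))
    (hx : IsUnit (redPoly p r hr x)) : IsUnit x := by
  obtain ⟨y, hy⟩ := hx.exists_right_inv
  obtain ⟨y, rfl⟩ := redPoly_surjective p r hr y
  have h1 : IsNilpotent (x * y - 1) := isNilpotent_of_red p r hr _ (by simp only [map_sub, map_mul, map_one, hy, sub_self])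
  have h2 := h1.isUnit_add_one
  rw [sub_add_cancel] at h2
  exact isUnit_of_mul_isUnit_left h2

theorem mem_nonZeroDivisors_iff_red (p r : ℕ) [Fact p.Prime] (hr : r ≠ 0)
    (x : Polynomial (ZMod (p ^ r))) :
    x ∈ nonZeroDivisors (Polynomial (ZMod (p ^ r))) ↔ redPoly p r hr x ≠ 0 := by
  rw [← not_iff_not, Polynomial.notMem_nonZeroDivisors_iff, not_not]
  constructor
  · rintro ⟨a, ha, hax⟩
    by_contra hne
    obtain ⟨i, hi⟩ : ∃ i, (redPoly p r hr x).coeff i ≠ 0 := by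
      by_contra hcon
      push Not at hcon
      exact hne (Polynomial.ext (by simpa using hcon))
    have h1 : a * x.coeff i = 0 := by
      have := congrArg (fun f => Polynomial.coeff f i) hax
      simpa using this
    have h2 : IsUnit (x.coeff i) := by
      obtain ⟨m, hm⟩ := ZMod.natCast_zmod_surjective (x.coeff i)
      simp only [Polynomial.coe_mapRingHom, Polynomial.coeff_map] at hi
      rw [← hm] at hi ⊢
      rw [map_natCast, Ne, ZMod.natCast_eq_zero_iff] at hi
      rw [ZMod.isUnit_iff_coprime]
      exact (Nat.Coprime.pow_left _ ((Nat.Prime.coprime_iff_not_dvd Fact.out).2 hi)).symm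
    exact ha ((h2.mul_left_eq_zero).1 h1)
  · intro h
    obtain ⟨z, rfl⟩ := redPoly_eq_zero p r hr x h
    refine ⟨(p : ZMod (p ^ r)) ^ (r - 1), ?_, ?_⟩
    · rw [← Nat.cast_pow, Ne, ZMod.natCast_eq_zero_iff]
      intro hd
      have := (Nat.pow_dvd_pow_iff_le_right (Nat.Prime.one_lt (Fact.out : p.Prime))).1 hd
      omega
    · rw [Polynomial.smul_eq_C_mul, C_pow, ← mul_assoc, ← pow_succ,
        Nat.sub_add_cancel (Nat.one_le_iff_ne_zero.2 hr), C_p_nilpotent, zero_mul]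

theorem dvd_pow_of_red (p r : ℕ) [Fact p.Prime] (hr : r ≠ 0)
    (x y : Polynomial (ZMod (p ^ r))) (h : redPoly p r hr x = redPoly p r hr y) : x ∣ y ^ r := by
  obtain ⟨z, hz⟩ := redPoly_eq_zero p r hr (y - x) (by rw [map_sub, h, sub_self])
  have h1 : y - (y - x) ∣ y ^ r - (y - x) ^ r := sub_dvd_pow_sub_pow _ _ _
  rw [hz, mul_pow, C_p_nilpotent, zero_mul, sub_zero, ← hz, sub_sub_cancel] at h1
  exact h1

theorem isCoprime_of_red (p r : ℕ) [Fact p.Prime] (hr : r ≠ 0)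
    (x y : Polynomial (ZMod (p ^ r))) (h : IsCoprime (redPoly p r hr x) (redPoly p r hr y)) :
    IsCoprime x y := by
  obtain ⟨a, b, hab⟩ := h
  obtain ⟨a, rfl⟩ := redPoly_surjective p r hr a
  obtain ⟨b, rfl⟩ := redPoly_surjective p r hr b
  have h1 : IsUnit (a * x + b * y) := isUnit_of_red p r hr _ (by
    simp only [map_add, map_mul]; rw [hab]; exact isUnit_one)
  obtain ⟨u, hu⟩ := h1.exists_left_inv
  exact ⟨u * a, u * b, by rw [← hu]; ring⟩

theorem polyToLS_injective (R : Type*) [CommRing R] : Function.Injective (polyToLS R) := by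
  unfold polyToLS
  intro x y h
  exact Polynomial.coe_injective R (HahnSeries.ofPowerSeries_injective h)

theorem isUnit_polyToLS (p r : ℕ) [Fact p.Prime] (hr : r ≠ 0)
    (x : Polynomial (ZMod (p ^ r))) (hx : redPoly p r hr x ≠ 0) :
    IsUnit (polyToLS (ZMod (p ^ r)) x) := by
  obtain ⟨j, y, hy, hxy⟩ : ∃ j y, IsUnit (Polynomial.coeff y 0) ∧
      redPoly p r hr x = redPoly p r hr (X ^ j * y) := by
    obtain ⟨y, hy, hnd⟩ := Polynomial.exists_eq_pow_rootMultiplicity_mul_and_not_dvd _ hx 0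
    obtain ⟨y, rfl⟩ := redPoly_surjective p r hr y
    refine ⟨rootMultiplicity 0 (redPoly p r hr x), y, ?_, ?_⟩
    rotate_left
    · rw [map_mul, map_pow]
      rw [C_0, sub_zero] at hy
      simpa using hy
    · rw [C_0, sub_zero, Polynomial.X_dvd_iff] at hnd
      obtain ⟨m, hm⟩ := ZMod.natCast_zmod_surjective (y.coeff 0)
      simp only [Polynomial.coe_mapRingHom, Polynomial.coeff_map] at hnd
      rw [← hm] at hnd ⊢
      rw [map_natCast, ZMod.natCast_eq_zero_iff] at hnd
      rw [ZMod.isUnit_iff_coprime]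
      exact (Nat.Coprime.pow_left _ ((Nat.Prime.coprime_iff_not_dvd Fact.out).2 hnd)).symm
  have hnil : IsNilpotent (x - X ^ j * y) := isNilpotent_of_red p r hr _ (by
    rw [map_sub, hxy, sub_self])
  have hnil' := hnil.map (polyToLS (ZMod (p ^ r)))
  have hu : IsUnit (polyToLS (ZMod (p ^ r)) (X ^ j * y)) := by
    rw [map_mul, map_pow]
    refine IsUnit.mul (IsUnit.pow _ ?_) ?_
    · have : polyToLS (ZMod (p ^ r)) X = HahnSeries.single 1 1 := by
        simp [polyToLS]
      rw [this]
      exact IsUnit.of_mul_eq_one (HahnSeries.single (-1) 1) (by simp)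
    · unfold polyToLS
      rw [RingHom.comp_apply]
      refine IsUnit.map (HahnSeries.ofPowerSeries ℤ (ZMod (p ^ r))) ?_
      rw [PowerSeries.isUnit_iff_constantCoeff]
      simpa using hy
  have := hnil'.isUnit_add_left_of_commute hu (Commute.all _ _)
  rwa [← map_add, add_sub_cancel] at this

/-- Every regular polynomial is a unit times a monic polynomial. -/
theorem exists_unit_mul_monic (p r : ℕ) [Fact p.Prime] (hr : r ≠ 0)
    (x : Polynomial (ZMod (p ^ r))) (hx : redPoly p r hr x ≠ 0) :
    ∃ w, IsUnit w ∧ (w * x).Monic ∧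
      (w * x).natDegree = (redPoly p r hr x).natDegree := by
  have hp : p.Prime := Fact.out
  have : Nontrivial (ZMod (p ^ r)) :=
    ZMod.nontrivial_iff.2 (by have := Nat.one_lt_pow hr hp.one_lt; omega)
  set d := (redPoly p r hr x).natDegree with hd
  -- a monic lift of the normalisation
  obtain ⟨u, hu⟩ := redPoly_surjective p r hr (C (redPoly p r hr x).leadingCoeff⁻¹)
  have hmon : (redPoly p r hr (u * x)).Monic := by
    rw [map_mul, hu, mul_comm]
    exact Polynomial.monic_mul_leadingCoeff_inv hx
  have hmdeg : (redPoly p r hr (u * x)).natDegree = d := by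
    rw [map_mul, hu, mul_comm, Polynomial.natDegree_mul_leadingCoeff_inv _ hx]
  have hulift : redPoly p r hr (u * x) ∈
      Polynomial.lifts (ZMod.castHom (dvd_pow_self p hr) (ZMod p)) :=
    ⟨u * x, rfl⟩
  obtain ⟨m, hm, hmd, hmm⟩ := Polynomial.lifts_and_natDegree_eq_and_monic hulift hmon
  rw [hmdeg] at hmd
  obtain ⟨z, hz⟩ := redPoly_eq_zero p r hr (m - u * x) (by
    rw [map_sub, sub_eq_zero]; exact hm)
  have hdiv : ∀ j : ℕ, ∀ g : Polynomial (ZMod (p ^ r)), ∃ q t s, t.degree < (d : WithBot ℕ) ∧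
      g = q * x + t + C (p : ZMod (p ^ r)) ^ j * s := by
    intro j
    induction j with
    | zero => exact fun g => ⟨0, 0, g, by simp, by simp⟩
    | succ j ih =>
      intro g
      obtain ⟨q, t, s, ht, hg⟩ := ih g
      have h1 := Polynomial.modByMonic_add_div s m
      have h2 := Polynomial.degree_modByMonic_lt s hmm
      have h3 : m = u * x + C (p : ZMod (p ^ r)) * z := by rw [← hz]; ring
      refine ⟨q + C (p : ZMod (p ^ r)) ^ j * u * (s /ₘ m),
        t + C (p : ZMod (p ^ r)) ^ j * (s %ₘ m), z * (s /ₘ m), ?_, ?_⟩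
      · refine lt_of_le_of_lt (Polynomial.degree_add_le _ _) (max_lt ht ?_)
        rw [← C_pow, ← Polynomial.smul_eq_C_mul]
        refine lt_of_le_of_lt (Polynomial.degree_smul_le _ _) ?_
        rwa [Polynomial.degree_eq_natDegree hmm.ne_zero, hmd] at h2
      · rw [hg]
        conv_lhs => rw [← h1]
        conv_lhs => enter [2, 2, 2, 1]; rw [h3]
        ring
  obtain ⟨q, t, s, ht, hg⟩ := hdiv r (X ^ d)
  rw [C_p_nilpotent, zero_mul, add_zero] at hg
  have hqx : q * x = X ^ d - t := by rw [hg]; ring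
  have hmonic : (q * x).Monic := by
    rw [hqx]; exact (Polynomial.monic_X_pow d).sub_of_left (by rwa [Polynomial.degree_X_pow])
  have hqd : (q * x).natDegree = d := by
    rw [hqx]; exact Polynomial.natDegree_eq_of_degree_eq_some (by
      rw [Polynomial.degree_sub_eq_left_of_degree_lt] <;> rw [Polynomial.degree_X_pow]; exact ht)
  refine ⟨q, ?_, hmonic, hqd⟩
  apply isUnit_of_red p r hr
  have h1 : (redPoly p r hr (q * x)).natDegree = d := by
    rw [← hqd]; exact hmonic.natDegree_map _
  have hq0 : redPoly p r hr q ≠ 0 := by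
    intro h0
    have : (redPoly p r hr (q * x)).Monic := hmonic.map _
    rw [map_mul, h0, zero_mul] at this
    exact this.ne_zero rfl
  rw [map_mul, Polynomial.natDegree_mul hq0 hx] at h1
  exact Polynomial.isUnit_iff_degree_eq_zero.2 (by
    rw [Polynomial.degree_eq_natDegree hq0]
    have : (redPoly p r hr q).natDegree = 0 := by omega
    rw [this]; rfl)

/-! ### Codes and internal degrees -/

theorem gcdMinors_assoc {p : ℕ} [Fact p.Prime] {k n : ℕ}
    (M : Matrix (Fin k) (Fin n) (Polynomial (ZMod p)))
    (M' : Matrix (Fin k) (Fin n) (Polynomial (ZMod p))) (x y : Polynomial (ZMod p))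
    (h : ∀ c, x * minorOn M c = y * minorOn M' c) :
    Associated (x * gcdMinors M) (y * gcdMinors M') := by
  unfold gcdMinors
  refine (Finset.gcd_mul_left' (s := Finset.univ) (f := fun c => minorOn M c) x).symm.trans ?_
  refine Associated.trans ?_ (Finset.gcd_mul_left' (s := Finset.univ) (f := fun c => minorOn M' c) y)
  simp only [h]
  exact Associated.refl _

theorem gcdMinors_ne_zero {p : ℕ} [Fact p.Prime] {k n : ℕ}
    (M : Matrix (Fin k) (Fin n) (Polynomial (ZMod p))) (c : Fin k → Fin n)
    (h : minorOn M c ≠ 0) : gcdMinors M ≠ 0 := by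
  unfold gcdMinors
  intro h0
  exact h ((Finset.gcd_eq_zero_iff).1 h0 c (Finset.mem_univ _))

theorem minorOn_reduceMod (p r : ℕ) (hr : r ≠ 0) {k n : ℕ}
    (G : Matrix (Fin k) (Fin n) (Polynomial (ZMod (p ^ r)))) (c : Fin k → Fin n) :
    minorOn (reduceMod p r hr G) c = redPoly p r hr (minorOn G c) := by
  rw [reduceMod_eq, minorOn_map]

theorem fullRowRank_iff (p r : ℕ) [Fact p.Prime] (hr : r ≠ 0) {k n : ℕ}
    (G : Matrix (Fin k) (Fin n) (Polynomial (ZMod (p ^ r)))) :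
    FullRowRank G ↔ ∃ c, redPoly p r hr (minorOn G c) ≠ 0 := by
  unfold FullRowRank
  simp only [mem_nonZeroDivisors_iff_red p r hr]

theorem code_subset_of_relation (p r : ℕ) [Fact p.Prime] (hr : r ≠ 0) {l n : ℕ}
    (V H : Matrix (Fin l) (Fin n) (Polynomial (ZMod (p ^ r)))) (s : Polynomial (ZMod (p ^ r)))
    (hs : redPoly p r hr s ≠ 0) (P : Matrix (Fin l) (Fin l) (Polynomial (ZMod (p ^ r))))
    (h : s • V = P * H) : code V ⊆ code H := by
  rintro v ⟨u, rfl⟩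
  obtain ⟨t, ht⟩ := (isUnit_polyToLS p r hr s hs).exists_left_inv
  have h1 : polyToLS _ s • V.map (polyToLS _) = P.map (polyToLS _) * H.map (polyToLS _) := by
    rw [← Matrix.map_mul, ← h]
    ext i j
    simp
  refine ⟨t • (u ᵥ* P.map (polyToLS _)), ?_⟩
  rw [Matrix.smul_vecMul, Matrix.vecMul_vecMul, ← h1, Matrix.vecMul_smul, smul_smul, ht, one_smul]

theorem code_eq_of_relation (p r : ℕ) [Fact p.Prime] (hr : r ≠ 0) {l n : ℕ}
    (V H : Matrix (Fin l) (Fin n) (Polynomial (ZMod (p ^ r)))) (s t : Polynomial (ZMod (p ^ r)))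
    (hs : redPoly p r hr s ≠ 0) (ht : redPoly p r hr t ≠ 0)
    (P Q : Matrix (Fin l) (Fin l) (Polynomial (ZMod (p ^ r))))
    (h : s • V = P * H) (h' : t • H = Q * V) : code V = code H :=
  Set.Subset.antisymm (code_subset_of_relation p r hr V H s hs P h)
    (code_subset_of_relation p r hr H V t ht Q h')

theorem row_mem_code {R : Type*} [CommRing R] {l n : ℕ}
    (V : Matrix (Fin l) (Fin n) (Polynomial R)) (i : Fin l) :
    (fun j => polyToLS R (V i j)) ∈ code V := by
  classical
  refine ⟨Pi.single i 1, ?_⟩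
  ext j
  simp

theorem relation_of_code {R : Type*} [CommRing R] {l n : ℕ}
    (V H : Matrix (Fin l) (Fin n) (Polynomial R)) (h : code V ⊆ code H) (c : Fin l → Fin n) :
    minorOn H c • V = (V.submatrix id c * (H.submatrix id c).adjugate) * H := by
  have h1 : ∀ i, ∃ u : Fin l → LaurentSeries R, (fun j => polyToLS R (V i j)) =
      u ᵥ* (H.map (polyToLS R)) := fun i => h (row_mem_code V i)
  choose U hU using h1
  have hV : V.map (polyToLS R) = Matrix.of U * H.map (polyToLS R) := by
    ext i j
    have := congrFun (hU i) j
    simp only [Matrix.map_apply, this]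
    rfl
  have hVc : (V.submatrix id c).map (polyToLS R)
      = Matrix.of U * (H.submatrix id c).map (polyToLS R) := by
    have := congrArg (fun M => M.submatrix id c) hV
    exact this
  have hadj : (H.submatrix id c).adjugate.map (polyToLS R)
      = ((H.submatrix id c).map (polyToLS R)).adjugate := by
    have := RingHom.map_adjugate (polyToLS R) (H.submatrix id c)
    simpa using this
  have hdet : ((H.submatrix id c).map (polyToLS R)).det = polyToLS R (minorOn H c) := by
    have := RingHom.map_det (polyToLS R) (H.submatrix id c)
    rw [minorOn, this]; rfl
  apply Matrix.map_injective (polyToLS_injective R)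
  beta_reduce
  rw [Matrix.map_mul, Matrix.map_mul, hVc, hadj, Matrix.mul_assoc (Matrix.of U),
    Matrix.mul_adjugate, hdet, Matrix.mul_smul, Matrix.mul_one, Matrix.smul_mul, ← hV]
  ext i j
  simp

theorem code_rowScale (p r : ℕ) [Fact p.Prime] (hr : r ≠ 0) {l n : ℕ}
    (V : Matrix (Fin l) (Fin n) (Polynomial (ZMod (p ^ r))))
    (A : Matrix (Fin l) (Fin l) (Polynomial (ZMod (p ^ r))))
    (hA : redPoly p r hr A.det ≠ 0) : code (A * V) = code V := by
  refine code_eq_of_relation p r hr (A * V) V 1 A.det (by simp) hA A A.adjugate (by simp) ?_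
  rw [← Matrix.mul_assoc, Matrix.adjugate_mul, Matrix.smul_mul, Matrix.one_mul]

theorem natDegree_gcd_le_of_min (p r : ℕ) [Fact p.Prime] (hr : r ≠ 0) {l n : ℕ} (hl : l ≠ 0)
    (H V : Matrix (Fin l) (Fin n) (Polynomial (ZMod (p ^ r))))
    (hH : FullRowRank H) (hV : FullRowRank V) (hcode : code V = code H)
    (hmin : ∀ H' : Matrix (Fin l) (Fin n) (Polynomial (ZMod (p ^ r))),
      FullRowRank H' → code H' = code H → intdeg H ≤ intdeg H') :
    (gcdMinors (reduceMod p r hr H)).natDegree ≤ (gcdMinors (reduceMod p r hr V)).natDegree := by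
  have hp : p.Prime := Fact.out
  have : Nontrivial (ZMod (p ^ r)) :=
    ZMod.nontrivial_iff.2 (by have := Nat.one_lt_pow hr hp.one_lt; omega)
  obtain ⟨c, hc⟩ := (fullRowRank_iff p r hr H).1 hH
  obtain ⟨c', hc'⟩ := (fullRowRank_iff p r hr V).1 hV
  have hrel := relation_of_code V H hcode.subset c
  set s := minorOn H c with hs
  set P := V.submatrix id c * (H.submatrix id c).adjugate with hP
  have hminor : ∀ x, s ^ l * minorOn V x = P.det * minorOn H x := by
    intro x
    rw [← minorOn_smul, hrel, minorOn_mul]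
  have hσ : redPoly p r hr (s ^ l) ≠ 0 := by
    rw [map_pow]; exact pow_ne_zero _ hc
  have hτ : redPoly p r hr P.det ≠ 0 := by
    intro h0
    have := congrArg (redPoly p r hr) (hminor c')
    rw [map_mul, map_mul, h0, zero_mul] at this
    exact mul_ne_zero hσ hc' this
  set σ := s ^ l with hσdef
  set τ := P.det with hτdef
  obtain ⟨w₁, hw₁, hm₁, hd₁⟩ := exists_unit_mul_monic p r hr σ hσ
  obtain ⟨w₂, hw₂, hm₂, hd₂⟩ := exists_unit_mul_monic p r hr τ hτ
  obtain ⟨t, ht⟩ := hw₁.exists_left_inv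
  have htu : IsUnit t := IsUnit.of_mul_eq_one w₁ ht
  let w := w₂ * t
  have hw : IsUnit w := hw₂.mul htu
  let i0 : Fin l := ⟨0, Nat.pos_of_ne_zero hl⟩
  let A : Matrix (Fin l) (Fin l) (Polynomial (ZMod (p ^ r))) :=
    Matrix.diagonal (Function.update 1 i0 w)
  have hA : A.det = w := by
    simp only [A, Matrix.det_diagonal]
    rw [Finset.prod_update_of_mem (Finset.mem_univ _)]
    simp
  have hAr : redPoly p r hr A.det ≠ 0 := by
    rw [hA]; exact (hw.map (redPoly p r hr)).ne_zero
  have hVm : ∀ x, minorOn (A * V) x = w * minorOn V x := fun x => by rw [minorOn_mul, hA]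
  have hVfull : FullRowRank (A * V) := by
    rw [fullRowRank_iff p r hr]
    refine ⟨c', ?_⟩
    rw [hVm, map_mul]
    exact mul_ne_zero (hA ▸ hAr) hc'
  have hle := hmin (A * V) hVfull ((code_rowScale p r hr V A hAr).trans hcode)
  have hrel2 : ∀ x, minorOn (A * V) x * (w₁ * σ) = minorOn H x * (w₂ * τ) := by
    intro x
    rw [hVm]
    have := hminor x
    calc w₂ * t * minorOn V x * (w₁ * σ) = (t * w₁) * w₂ * (σ * minorOn V x) := by ring
      _ = _ := by rw [this, ht]; ring
  obtain ⟨c₀, -, hc₀⟩ := Finset.exists_mem_eq_sup (Finset.univ : Finset (Fin l → Fin n))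
    ⟨c, Finset.mem_univ _⟩ (fun x => (minorOn (A * V) x).degree)
  have hc₀' : intdeg (A * V) = (minorOn (A * V) c₀).degree := hc₀
  have hne : minorOn (A * V) c₀ ≠ 0 := by
    intro h0
    rw [h0, Polynomial.degree_zero] at hc₀'
    have h1 : (minorOn (A * V) c').degree ≤ intdeg (A * V) :=
      Finset.le_sup (f := fun x => (minorOn (A * V) x).degree) (Finset.mem_univ c')
    rw [hc₀', le_bot_iff, Polynomial.degree_eq_bot, hVm] at h1
    have := congrArg (redPoly p r hr) h1
    rw [map_mul, map_zero] at this
    exact mul_ne_zero (hA ▸ hAr) hc' this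
  have hdeg : (w₁ * σ).natDegree ≤ (w₂ * τ).natDegree := by
    have h1 := congrArg Polynomial.degree (hrel2 c₀)
    rw [hm₁.degree_mul, hm₂.degree_mul] at h1
    have h2 : (minorOn H c₀).degree ≤ (minorOn (A * V) c₀).degree := by
      rw [← hc₀']
      exact (Finset.le_sup (f := fun x => (minorOn H x).degree) (Finset.mem_univ c₀)).trans hle
    have h3 : (minorOn (A * V) c₀).degree + (w₁ * σ).degree
        ≤ (minorOn (A * V) c₀).degree + (w₂ * τ).degree := by
      rw [h1]; gcongr
    rw [Polynomial.degree_eq_natDegree hne, Polynomial.degree_eq_natDegree hm₁.ne_zero,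
      Polynomial.degree_eq_natDegree hm₂.ne_zero] at h3
    have h4 : (minorOn (A * V) c₀).natDegree + (w₁ * σ).natDegree
        ≤ (minorOn (A * V) c₀).natDegree + (w₂ * τ).natDegree := by exact_mod_cast h3
    omega
  rw [hd₁, hd₂] at hdeg
  have hass := gcdMinors_assoc (reduceMod p r hr V) (reduceMod p r hr H)
    (redPoly p r hr σ) (redPoly p r hr τ) (fun x => by
      rw [minorOn_reduceMod, minorOn_reduceMod, ← map_mul, ← map_mul, hminor])
  have hV0 : gcdMinors (reduceMod p r hr V) ≠ 0 :=
    gcdMinors_ne_zero _ c' (by rw [minorOn_reduceMod]; exact hc')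
  have hH0 : gcdMinors (reduceMod p r hr H) ≠ 0 :=
    gcdMinors_ne_zero _ c (by rw [minorOn_reduceMod]; exact hc)
  have hfin := Polynomial.natDegree_eq_of_degree_eq (Polynomial.degree_eq_degree_of_associated hass)
  rw [Polynomial.natDegree_mul hσ hV0, Polynomial.natDegree_mul hτ hH0] at hfin
  omega

/-! ### Vectors orthogonal to `G` -/

theorem eq_zero_of_mulVec {R : Type*} [CommRing R] {k l n : ℕ}
    (G : Matrix (Fin k) (Fin n) R) (e : Fin k ⊕ Fin l ≃ Fin n)
    (hG : minorOn G (e ∘ Sum.inl) ∈ nonZeroDivisors R) (z : Fin n → R)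
    (hz : G *ᵥ z = 0) (h0 : ∀ j, z (e (Sum.inr j)) = 0) : z = 0 := by
  have h1 : G.submatrix id (e ∘ Sum.inl) *ᵥ (z ∘ e ∘ Sum.inl) = 0 := by
    ext i
    have := congrFun hz i
    simp only [Matrix.mulVec, dotProduct, Pi.zero_apply] at this ⊢
    rw [← Equiv.sum_comp e, Fintype.sum_sum_type] at this
    simpa [h0] using this
  have h2 := congrArg (fun v => (G.submatrix id (e ∘ Sum.inl)).adjugate *ᵥ v) h1
  simp only [Matrix.mulVec_mulVec, Matrix.adjugate_mul, Matrix.mulVec_zero, Matrix.smul_mulVec,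
    Matrix.one_mulVec] at h2
  ext j
  obtain ⟨i, rfl⟩ := e.surjective j
  rcases i with i | i
  · have h3 := congrFun h2 i
    simp only [Pi.smul_apply, smul_eq_mul, Pi.zero_apply] at h3
    exact (mem_nonZeroDivisors_iff.1 hG).1 _ h3
  · exact h0 i

theorem relation_of_orthogonal {R : Type*} [CommRing R] {k l n : ℕ}
    (G : Matrix (Fin k) (Fin n) R) (H X : Matrix (Fin l) (Fin n) R) (e : Fin k ⊕ Fin l ≃ Fin n)
    (hG : minorOn G (e ∘ Sum.inl) ∈ nonZeroDivisors R) (hH : G * Hᵀ = 0) (hX : G * Xᵀ = 0) :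
    minorOn H (e ∘ Sum.inr) • X
      = (X.submatrix id (e ∘ Sum.inr) * (H.submatrix id (e ∘ Sum.inr)).adjugate) * H := by
  set d := e ∘ Sum.inr with hd
  set Q := X.submatrix id d * (H.submatrix id d).adjugate with hQ
  have hZ : G * (minorOn H d • X - Q * H)ᵀ = 0 := by
    rw [Matrix.transpose_sub, Matrix.mul_sub, Matrix.transpose_smul, Matrix.mul_smul, hX,
      Matrix.transpose_mul, ← Matrix.mul_assoc, hH]
    simp
  have hsub : (minorOn H d • X - Q * H).submatrix id d = 0 := by
    have h1 : (Q * H).submatrix id d = Q * H.submatrix id d := rfl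
    have h2 : (minorOn H d • X - Q * H).submatrix id d
      = minorOn H d • X.submatrix id d - (Q * H).submatrix id d := rfl
    rw [h2, h1, hQ, Matrix.mul_assoc, Matrix.adjugate_mul, Matrix.mul_smul, Matrix.mul_one]
    exact sub_self _
  rw [← sub_eq_zero]
  ext i j
  have := eq_zero_of_mulVec G e hG ((minorOn H d • X - Q * H) i) (by
    ext a
    exact congrFun (congrFun hZ a) i) (fun b => congrFun (congrFun hsub i) b)
  exact congrFun this j

/-! ### Gluing -/

theorem glue (p r : ℕ) [Fact p.Prime] (hr : r ≠ 0) {l n : ℕ}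
    (H H₀ : Matrix (Fin l) (Fin n) (Polynomial (ZMod (p ^ r))))
    (d : Fin l → Fin n) (hd : redPoly p r hr (minorOn H d) ≠ 0)
    (a b : Polynomial (ZMod (p ^ r))) (hab : IsCoprime a b)
    (ha : redPoly p r hr a ≠ 0) (hb : redPoly p r hr b ≠ 0)
    (P P' : Matrix (Fin l) (Fin l) (Polynomial (ZMod (p ^ r))))
    (hP : (a * b) • H₀ = P * H) (hP' : (a * b) • H = P' * H₀) :
    ∃ V : Matrix (Fin l) (Fin n) (Polynomial (ZMod (p ^ r))),
      (∃ A : Matrix (Fin l) (Fin l) (Polynomial (ZMod (p ^ r))), a • V = A * H) ∧ ∃ e, redPoly p r hr e = 1 ∧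
        (∃ B : Matrix (Fin l) (Fin l) (Polynomial (ZMod (p ^ r))), e • (a • H) = B * V) ∧
        (∃ B : Matrix (Fin l) (Fin l) (Polynomial (ZMod (p ^ r))), e • (b • H₀) = B * V) := by
  have hd0 : redPoly p r hr (minorOn H₀ d) ≠ 0 := by
    intro h0
    have h1 : (a * b) ^ l * minorOn H d = P'.det * minorOn H₀ d := by
      rw [← minorOn_smul, hP', minorOn_mul]
    have := congrArg (redPoly p r hr) h1
    rw [map_mul, map_mul, h0, mul_zero, map_pow, map_mul] at this
    exact mul_ne_zero (pow_ne_zero _ (mul_ne_zero ha hb)) hd this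
  let N : Submodule (Polynomial (ZMod (p ^ r))) (Fin n → Polynomial (ZMod (p ^ r))) :=
    { carrier := {v | (∃ u, a • v = u ᵥ* H) ∧ ∃ u, b • v = u ᵥ* H₀}
      add_mem' := by
        rintro x y ⟨⟨u, hu⟩, ⟨u', hu'⟩⟩ ⟨⟨v, hv⟩, ⟨v', hv'⟩⟩
        exact ⟨⟨u + v, by rw [smul_add, hu, hv, Matrix.add_vecMul]⟩,
          ⟨u' + v', by rw [smul_add, hu', hv', Matrix.add_vecMul]⟩⟩
      zero_mem' := ⟨⟨0, by simp⟩, ⟨0, by simp⟩⟩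
      smul_mem' := by
        rintro c x ⟨⟨u, hu⟩, ⟨u', hu'⟩⟩
        exact ⟨⟨c • u, by rw [smul_comm, hu, Matrix.smul_vecMul]⟩,
          ⟨c • u', by rw [smul_comm, hu', Matrix.smul_vecMul]⟩⟩ }
  have hN1 : ∀ u, a • (u ᵥ* H) ∈ N := by
    intro u
    refine ⟨⟨a • (a • u), by simp only [Matrix.smul_vecMul]⟩, ⟨u ᵥ* P', ?_⟩⟩
    rw [Matrix.vecMul_vecMul, ← hP', Matrix.vecMul_smul, smul_smul, mul_comm]
  have hN2 : ∀ u, b • (u ᵥ* H₀) ∈ N := by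
    intro u
    refine ⟨⟨u ᵥ* P, ?_⟩, ⟨b • (b • u), by simp only [Matrix.smul_vecMul]⟩⟩
    rw [Matrix.vecMul_vecMul, ← hP, Matrix.vecMul_smul, smul_smul]
  -- vanishing of coordinates modulo `p`
  have hvan : ∀ (M : Matrix (Fin l) (Fin n) (Polynomial (ZMod (p ^ r)))),
      redPoly p r hr (minorOn M d) ≠ 0 → ∀ (x : Polynomial (ZMod (p ^ r)))
      (w : Fin n → Polynomial (ZMod (p ^ r))) (u : Fin l → Polynomial (ZMod (p ^ r))),
      x • w = u ᵥ* M → (∀ j, redPoly p r hr (w (d j)) = 0) →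
      ∃ u', u = C (p : ZMod (p ^ r)) • u' := by
    intro M hM x w u hxw hw
    have h1 : (fun i => redPoly p r hr (u i)) ᵥ* ((M.map (redPoly p r hr)).submatrix id d) = 0 := by
      ext1 j
      have h2 := congrArg (redPoly p r hr) (congrFun hxw (d j))
      rw [Pi.smul_apply, smul_eq_mul, map_mul, hw j, mul_zero] at h2
      simp only [Matrix.vecMul, dotProduct, map_sum, map_mul] at h2
      simp only [Matrix.vecMul, dotProduct]
      exact h2.symm
    have h3 := Matrix.eq_zero_of_vecMul_eq_zero (by
      have := minorOn_map (redPoly p r hr) M d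
      rw [← this] at hM
      exact hM) h1
    choose u' hu' using fun i => redPoly_eq_zero p r hr (u i) (congrFun h3 i)
    exact ⟨u', funext hu'⟩
  obtain ⟨V, hVN, e, he, hgen⟩ := exists_generators (redPoly p r hr) (redPoly_surjective p r hr)
    (C (p : ZMod (p ^ r))) (redPoly_p p r hr) N d (by
      rintro w ⟨⟨u, hu⟩, ⟨u', hu'⟩⟩ hw
      obtain ⟨v, rfl⟩ := hvan H hd a w u hu hw
      obtain ⟨v', rfl⟩ := hvan H₀ hd0 b w u' hu' hw
      obtain ⟨α, β, hαβ⟩ := (hab.pow (m := 2) (n := 2))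
      refine ⟨α • (a • (v ᵥ* H)) + β • (b • (v' ᵥ* H₀)),
        N.add_mem (N.smul_mem _ (hN1 _)) (N.smul_mem _ (hN2 _)), ?_⟩
      rw [Matrix.smul_vecMul] at hu hu'
      have : w = (α * a) • (a • w) + (β * b) • (b • w) := by
        rw [smul_smul, smul_smul, ← add_smul]
        have : α * a * a + β * b * b = 1 := by rw [← hαβ]; ring
        rw [this, one_smul]
      rw [this, hu, hu', smul_add]
      simp only [smul_smul]
      congr 2 <;> ring)
  refine ⟨V, ?_, e, he, ?_, ?_⟩
  · choose A hA using fun i => (hVN i).1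
    exact ⟨Matrix.of A, by ext1 i j; exact congrFun (hA i) j⟩
  · have h1 : ∀ i, (a • H) i ∈ N := by
      intro i
      have := hN1 (Pi.single i 1)
      rwa [Matrix.single_one_vecMul] at this
    choose B hB using fun i => hgen _ (h1 i)
    exact ⟨Matrix.of B, by ext1 i j; exact congrFun (hB i) j⟩
  · have h1 : ∀ i, (b • H₀) i ∈ N := by
      intro i
      have := hN2 (Pi.single i 1)
      rwa [Matrix.single_one_vecMul] at this
    choose B hB using fun i => hgen _ (h1 i)
    exact ⟨Matrix.of B, by ext1 i j; exact congrFun (hB i) j⟩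

/-! ### The orthogonal complement of a lift to `ℤ[X]` -/

/-- Reduction of integer polynomials modulo `p`. -/
noncomputable abbrev intRed (p : ℕ) : Polynomial ℤ →+* Polynomial (ZMod p) :=
  Polynomial.mapRingHom (Int.castRingHom (ZMod p))

theorem intRed_surjective (p : ℕ) : Function.Surjective (intRed p) :=
  Polynomial.map_surjective _ (ZMod.ringHom_surjective _)

theorem intRed_eq_zero (p : ℕ) (x : Polynomial ℤ) (hx : intRed p x = 0) :
    ∃ z, x = C (p : ℤ) * z := by
  have : C (p : ℤ) ∣ x := by
    rw [Polynomial.C_dvd_iff_dvd_coeff]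
    intro i
    have := congrArg (fun f => Polynomial.coeff f i) hx
    simp only [intRed, Polynomial.coe_mapRingHom, Polynomial.coeff_map, Polynomial.coeff_zero,
      eq_intCast] at this
    exact (ZMod.intCast_zmod_eq_zero_iff_dvd _ _).1 this
  exact this

theorem redPoly_intRed (p r : ℕ) (hr : r ≠ 0) (x : Polynomial ℤ) :
    redPoly p r hr (intRed (p ^ r) x) = intRed p x := by
  simp only [intRed, Polynomial.coe_mapRingHom, Polynomial.map_map]
  congr 1
  exact RingHom.ext_int _ _

theorem isUnit_map_of_primes {S K : Type*} [CommRing S] [IsDomain S] [UniqueFactorizationMonoid S]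
    [CommRing K] (ρ : S →+* K) (σ : S) (hσ : σ ≠ 0)
    (h : ∀ q, Prime q → q ∣ σ → IsUnit (ρ q)) : IsUnit (ρ σ) := by
  induction σ using UniqueFactorizationMonoid.induction_on_prime with
  | h₁ => exact absurd rfl hσ
  | h₂ x hx => exact hx.map ρ
  | h₃ a q ha hq ih =>
    rw [map_mul]
    exact (h q hq (dvd_mul_right _ _)).mul
      (ih ha (fun q' hq' hd => h q' hq' (hd.mul_left _)))

theorem prime_dvd_minors {l n : ℕ} {S : Type*} [CommRing S] [IsDomain S]
    (V : Matrix (Fin l) (Fin n) S) (N : Submodule S (Fin n → S))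
    (hsat : ∀ (q : S) (v : Fin n → S), q ≠ 0 → q • v ∈ N → v ∈ N) (hV : ∀ i, V i ∈ N)
    (e₀ : S) (hgen : ∀ w ∈ N, ∃ y : Fin l → S, e₀ • w = y ᵥ* V)
    (d : Fin l → Fin n) (hd : minorOn V d ≠ 0)
    (q : S) (hq : Prime q) (h : ∀ c, q ∣ minorOn V c) : q ∣ e₀ := by
  have hqp : (Ideal.span {q}).IsPrime := (Ideal.span_singleton_prime hq.ne_zero).2 hq
  let f := Ideal.Quotient.mk (Ideal.span {q})
  have hf : ∀ x, f x = 0 ↔ q ∣ x := fun x => by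
    rw [Ideal.Quotient.eq_zero_iff_mem, Ideal.mem_span_singleton]
  obtain ⟨y, hy, hyV⟩ := exists_vecMul_eq_zero_of_minors (V.map f) (fun c => by
    rw [minorOn_map, hf]; exact h c)
  choose y' hy' using fun i => Ideal.Quotient.mk_surjective (I := Ideal.span {q}) (y i)
  have h1 : ∀ j, q ∣ (y' ᵥ* V) j := by
    intro j
    rw [← hf]
    have := congrFun hyV j
    simp only [Matrix.vecMul, dotProduct, Matrix.map_apply, Pi.zero_apply] at this ⊢
    rw [map_sum, ← this]
    refine Finset.sum_congr rfl (fun i _ => ?_)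
    rw [map_mul, ← hy' i]
  choose v hv using h1
  have hv' : q • v = y' ᵥ* V := by
    ext j; simp [hv j]
  have hvN : v ∈ N := by
    apply hsat q v hq.ne_zero
    rw [hv', Matrix.vecMul_eq_sum]
    exact N.sum_mem (fun i _ => N.smul_mem _ (hV i))
  obtain ⟨z, hz⟩ := hgen v hvN
  have h2 : (e₀ • y' - q • z) ᵥ* V = 0 := by
    rw [Matrix.sub_vecMul, Matrix.smul_vecMul, Matrix.smul_vecMul, ← hv', ← hz, smul_comm, sub_self]
  have h3 : (e₀ • y' - q • z) = 0 := by
    refine Matrix.eq_zero_of_vecMul_eq_zero (M := V.submatrix id d) hd ?_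
    ext j
    exact congrFun h2 (d j)
  obtain ⟨i, hi⟩ := Function.ne_iff.1 hy
  have h4 : q ∣ e₀ * y' i := ⟨z i, by
    have := congrFun h3 i
    simpa [sub_eq_zero] using this⟩
  rcases hq.dvd_or_dvd h4 with h5 | h5
  · exact h5
  · exact absurd ((hy' i).symm.trans ((hf _).2 h5)) hi

/-- The explicit matrix of solutions given by the Cramer rule. -/
theorem exists_cramer {R : Type*} [CommRing R] {k l n : ℕ}
    (G : Matrix (Fin k) (Fin n) R) (e : Fin k ⊕ Fin l ≃ Fin n) :
    ∃ K : Matrix (Fin l) (Fin n) R, (∀ i, G *ᵥ (K i) = 0) ∧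
      minorOn K (e ∘ Sum.inr) = minorOn G (e ∘ Sum.inl) ^ l := by
  classical
  set A := G.submatrix id (e ∘ Sum.inl) with hA
  set B := G.submatrix id (e ∘ Sum.inr) with hB
  let K0 : Matrix (Fin l) (Fin k ⊕ Fin l) R :=
    Matrix.fromCols (-(A.adjugate * B)ᵀ) (A.det • (1 : Matrix (Fin l) (Fin l) R))
  refine ⟨K0.submatrix id e.symm, ?_, ?_⟩
  · have h1 : G * (K0.submatrix id e.symm)ᵀ = 0 := by
      have hGe : G.submatrix id e = Matrix.fromCols A B := by
        ext i j; rcases j with j | j <;> rfl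
      have h2 : G * (K0.submatrix id e.symm)ᵀ = G.submatrix id e * K0ᵀ := by
        ext i j
        simp only [Matrix.mul_apply]
        rw [← Equiv.sum_comp e]
        simp
      rw [h2, hGe, Matrix.transpose_fromCols, Matrix.fromCols_mul_fromRows]
      simp [← Matrix.mul_assoc, Matrix.mul_adjugate]
    intro i
    ext a
    exact congrFun (congrFun h1 a) i
  · have : (K0.submatrix id e.symm).submatrix id (e ∘ Sum.inr) = A.det • (1 : Matrix (Fin l) (Fin l) R) := by
      ext i j
      simp [K0]
    unfold minorOn
    rw [this, Matrix.det_smul]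
    simp [hA]

theorem exists_good_dual (p r : ℕ) [Fact p.Prime] (hr : r ≠ 0) {k l n : ℕ} (hkl : k + l = n)
    (G : Matrix (Fin k) (Fin n) (Polynomial (ZMod (p ^ r)))) (hG : FullRowRank G) :
    ∃ H₀ : Matrix (Fin l) (Fin n) (Polynomial (ZMod (p ^ r))), G * H₀ᵀ = 0 ∧ FullRowRank H₀ ∧
      gcdMinors (reduceMod p r hr H₀) ∣ gcdMinors (reduceMod p r hr G) := by
  have hp : p.Prime := Fact.out
  obtain ⟨c, hc⟩ := (fullRowRank_iff p r hr G).1 hG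
  have hcinj : Function.Injective c := by
    by_contra hn
    rw [minorOn_eq_zero_of_not_injective G c hn, map_zero] at hc
    exact hc rfl
  obtain ⟨e, he⟩ := exists_equiv_of_injective hkl c hcinj
  have hec : e ∘ Sum.inl = c := funext he
  choose G' hG' using fun i j => intRed_surjective (p ^ r) (G i j)
  have hGmap : (Matrix.of G').map (intRed (p ^ r)) = G := by ext1 i j; exact hG' i j
  generalize Matrix.of G' = G' at hGmap
  have hGm : ∀ x, redPoly p r hr (minorOn G x) = intRed p (minorOn G' x) := fun x => by
    rw [← redPoly_intRed p r hr, ← minorOn_map (intRed (p ^ r)), hGmap]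
  have hg : intRed p (minorOn G' (e ∘ Sum.inl)) ≠ 0 := by rw [hec, ← hGm]; exact hc
  let N : Submodule (Polynomial ℤ) (Fin n → Polynomial ℤ) := LinearMap.ker (Matrix.mulVecLin G')
  have hNmem : ∀ w, w ∈ N ↔ G' *ᵥ w = 0 := fun w => by simp [N]
  have hsat : ∀ (q : Polynomial ℤ) (v : Fin n → Polynomial ℤ), q ≠ 0 → q • v ∈ N → v ∈ N := by
    intro q v hq hv
    rw [hNmem, Matrix.mulVec_smul] at hv
    rw [hNmem]
    exact (smul_eq_zero.1 hv).resolve_left hq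
  have hpC : (C (p : ℤ)) ≠ 0 := by
    rw [Ne, Polynomial.C_eq_zero]; exact_mod_cast hp.ne_zero
  obtain ⟨V, hVN, e₀, he₀, hgen⟩ := exists_generators (intRed p) (intRed_surjective p)
    (C (p : ℤ)) (by simp) N (e ∘ Sum.inr) (by
      intro w hw h0
      rw [hNmem] at hw
      have h1 : (fun i => intRed p (w i)) = 0 := by
        refine eq_zero_of_mulVec (G'.map (intRed p)) e ?_ _ ?_ h0
        · rw [minorOn_map]; exact mem_nonZeroDivisors_of_ne_zero hg
        · ext1 i
          have := congrArg (intRed p) (congrFun hw i)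
          simp only [Matrix.mulVec, dotProduct, map_sum, map_mul, Pi.zero_apply, map_zero] at this
          exact this
      choose w' hw' using fun i => intRed_eq_zero p (w i) (congrFun h1 i)
      have hww : w = C (p : ℤ) • w' := funext hw'
      refine ⟨w', hsat _ w' hpC ?_, hww⟩
      rw [← hww, hNmem]; exact hw)
  have hGV : G' * Vᵀ = 0 := by
    ext1 i j
    exact congrFun ((hNmem _).1 (hVN j)) i
  have hh : intRed p (minorOn V (e ∘ Sum.inr)) ≠ 0 := by
    obtain ⟨K, hK, hKm⟩ := exists_cramer G' e
    choose Y hY using fun i => hgen (K i) ((hNmem _).2 (hK i))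
    have h1 : e₀ • K = Matrix.of Y * V := by ext1 i j; exact congrFun (hY i) j
    have h2 : e₀ ^ l * minorOn K (e ∘ Sum.inr) = (Matrix.of Y).det * minorOn V (e ∘ Sum.inr) := by
      rw [← minorOn_smul, h1, minorOn_mul]
    intro h0
    have h3 := congrArg (intRed p) h2
    rw [map_mul, map_mul, h0, mul_zero, map_pow, he₀, one_pow, one_mul, hKm, map_pow] at h3
    exact pow_ne_zero _ hg h3
  have hh0 : minorOn V (e ∘ Sum.inr) ≠ 0 := fun h => hh (by rw [h, map_zero])
  obtain ⟨σ, τ, γ, hrel, hσ, hτ⟩ := UniqueFactorizationMonoid.exists_reduced_factors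
    (minorOn V (e ∘ Sum.inr)) hh0 (minorOn G' (e ∘ Sum.inl))
  have hγ : γ ≠ 0 := fun h => hh0 (by rw [← hσ, h, zero_mul])
  have hσ0 : σ ≠ 0 := fun h => hh0 (by rw [← hσ, h, mul_zero])
  -- the key relation
  have key : ∀ d : Fin k ⊕ Fin l ≃ Fin n, ∃ ε : ℤˣ, τ * minorOn V (d ∘ Sum.inr)
      = σ * (((ε : ℤ) : Polynomial ℤ) * minorOn G' (d ∘ Sum.inl)) := by
    intro d
    obtain ⟨ε, hε⟩ := dual_minors G' V hGV e d
    refine ⟨ε, mul_left_cancel₀ hγ ?_⟩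
    rw [← mul_assoc, hτ, hε, ← hσ]
    ring
  have hσV : ∀ x, σ ∣ minorOn V x := by
    intro x
    by_cases hx : Function.Injective x
    · obtain ⟨d, hd⟩ := exists_equiv_of_injective (k := l) (l := k) (by omega) x hx
      obtain ⟨ε, hε⟩ := key ((Equiv.sumComm _ _).trans d)
      have hdx : ((Equiv.sumComm (Fin k) (Fin l)).trans d) ∘ Sum.inr = x := funext hd
      rw [hdx] at hε
      exact hrel.dvd_of_dvd_mul_left ⟨_, hε⟩
    · rw [minorOn_eq_zero_of_not_injective V x hx]; exact dvd_zero _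
  have hσu : IsUnit (intRed p σ) := by
    refine isUnit_map_of_primes _ σ hσ0 (fun q hq hqσ => ?_)
    have := prime_dvd_minors V N hsat hVN e₀ hgen (e ∘ Sum.inr) hh0 q hq
      (fun x => hqσ.trans (hσV x))
    have h2 := map_dvd (intRed p) this
    rw [he₀] at h2
    exact isUnit_of_dvd_one h2
  refine ⟨V.map (intRed (p ^ r)), ?_, (fullRowRank_iff p r hr _).2 ⟨e ∘ Sum.inr, by
    rw [minorOn_map, redPoly_intRed]; exact hh⟩, ?_⟩
  · have := congrArg (fun M => M.map (intRed (p ^ r))) hGV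
    beta_reduce at this
    rw [Matrix.map_mul, hGmap] at this
    rw [← Matrix.transpose_map, this]
    ext1 i j; simp
  · unfold gcdMinors
    refine Finset.dvd_gcd (fun x _ => ?_)
    by_cases hx : Function.Injective x
    · obtain ⟨d, hd⟩ := exists_equiv_of_injective hkl x hx
      have hdx : d ∘ Sum.inl = x := funext hd
      refine (Finset.gcd_dvd (Finset.mem_univ (d ∘ Sum.inr))).trans ?_
      obtain ⟨ε, hε⟩ := key d
      rw [hdx] at hε
      rw [minorOn_reduceMod, minorOn_reduceMod, hGm, minorOn_map, redPoly_intRed]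
      obtain ⟨s, hs⟩ := hσu.exists_left_inv
      have h1 := congrArg (intRed p) hε
      rw [map_mul, map_mul, map_mul, map_intCast] at h1
      have hεε : (((ε : ℤ) : Polynomial (ZMod p))) * ((ε : ℤ) : Polynomial (ZMod p)) = 1 := by
        have : (ε : ℤ) * (ε : ℤ) = 1 := by
          rw [← Units.val_mul, Int.units_mul_self, Units.val_one]
        exact_mod_cast congrArg (Int.cast : ℤ → Polynomial (ZMod p)) this
      refine ⟨s * ((ε : ℤ) : Polynomial (ZMod p)) * intRed p τ, ?_⟩
      calc intRed p (minorOn G' x)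
          = (s * intRed p σ) * (((ε : ℤ) : Polynomial (ZMod p)) * ((ε : ℤ) : Polynomial (ZMod p)))
            * intRed p (minorOn G' x) := by rw [hs, hεε]; ring
        _ = s * ((ε : ℤ) : Polynomial (ZMod p)) * (intRed p τ * intRed p (minorOn V (d ∘ Sum.inr))) := by
            rw [h1]; ring
        _ = _ := by ring
    · rw [minorOn_eq_zero_of_not_injective _ x hx]; exact dvd_zero _

/-! ### The main divisibility -/

/-- If `H` is orthogonal to `G` and has full rank, the minors complementary to regular minors
of `G` are regular. -/
theorem red_minor_ne_zero (p r : ℕ) [Fact p.Prime] (hr : r ≠ 0) {k l n : ℕ} (hkl : k + l = n)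
    (G : Matrix (Fin k) (Fin n) (Polynomial (ZMod (p ^ r))))
    (H : Matrix (Fin l) (Fin n) (Polynomial (ZMod (p ^ r)))) (hGH : G * Hᵀ = 0)
    (hH : FullRowRank H) (e : Fin k ⊕ Fin l ≃ Fin n)
    (he : redPoly p r hr (minorOn G (e ∘ Sum.inl)) ≠ 0) :
    redPoly p r hr (minorOn H (e ∘ Sum.inr)) ≠ 0 := by
  obtain ⟨x, hx⟩ := (fullRowRank_iff p r hr H).1 hH
  have hxinj : Function.Injective x := by
    by_contra hn
    rw [minorOn_eq_zero_of_not_injective H x hn, map_zero] at hx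
    exact hx rfl
  obtain ⟨d, hd⟩ := exists_equiv_of_injective (k := l) (l := k) (by omega) x hxinj
  have hdx : ((Equiv.sumComm (Fin k) (Fin l)).trans d) ∘ Sum.inr = x := funext hd
  obtain ⟨ε, hε⟩ := dual_minors G H hGH e ((Equiv.sumComm _ _).trans d)
  rw [hdx] at hε
  intro h0
  have h1 := congrArg (redPoly p r hr) hε
  rw [map_mul, map_mul, map_mul, h0, mul_zero, mul_zero] at h1
  exact mul_ne_zero he hx h1

theorem pow_dvd_of_degree {F : Type*} [Field F] (f x v a : Polynomial F) (hf : Prime f)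
    (hx : x ≠ 0) (hv : v ≠ 0) (m i : ℕ) (ha : a = f ^ m) (hd : v ∣ a * x)
    (hdeg : x.natDegree ≤ v.natDegree) (hi : f ^ i ∣ x) : f ^ i ∣ v := by
  subst ha
  have hfx : FiniteMultiplicity f x := FiniteMultiplicity.of_prime_left hf hx
  have hfv : FiniteMultiplicity f v := FiniteMultiplicity.of_prime_left hf hv
  obtain ⟨x', hx', hnx⟩ := hfx.exists_eq_pow_mul_and_not_dvd
  obtain ⟨v', hv', hnv⟩ := hfv.exists_eq_pow_mul_and_not_dvd
  have hi' : i ≤ multiplicity f x := hfx.le_multiplicity_of_pow_dvd hi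
  set s := multiplicity f x
  set t := multiplicity f v
  have hx'0 : x' ≠ 0 := fun h => hnx (h ▸ dvd_zero _)
  have hv'0 : v' ≠ 0 := fun h => hnv (h ▸ dvd_zero _)
  have h1 : v' ∣ f ^ (m + s) * x' := by
    rw [pow_add, mul_assoc, ← hx']
    exact (Dvd.intro_left _ hv'.symm).trans hd
  have hcop : IsCoprime v' (f ^ (m + s)) :=
    ((hf.irreducible.coprime_iff_not_dvd.2 hnv).symm).pow_right
  have h2 := Polynomial.natDegree_le_of_dvd (hcop.dvd_of_dvd_mul_left h1) hx'0
  have h3 : x.natDegree = s * f.natDegree + x'.natDegree := by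
    rw [hx', Polynomial.natDegree_mul (pow_ne_zero _ hf.ne_zero) hx'0, Polynomial.natDegree_pow]
  have h4 : v.natDegree = t * f.natDegree + v'.natDegree := by
    rw [hv', Polynomial.natDegree_mul (pow_ne_zero _ hf.ne_zero) hv'0, Polynomial.natDegree_pow]
  have hfd : 0 < f.natDegree := hf.irreducible.natDegree_pos
  have h5 : s * f.natDegree ≤ t * f.natDegree := by omega
  have h6 : s ≤ t := Nat.le_of_mul_le_mul_right h5 hfd
  rw [hv']
  exact (pow_dvd_pow f (hi'.trans h6)).mul_right _

theorem gcdMinors_dvd_of_min (p r : ℕ) [Fact p.Prime] (hr : r ≠ 0) {l n : ℕ} (hl : l ≠ 0)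
    (H H₀ : Matrix (Fin l) (Fin n) (Polynomial (ZMod (p ^ r))))
    (d : Fin l → Fin n) (hd : redPoly p r hr (minorOn H d) ≠ 0)
    (hd0 : redPoly p r hr (minorOn H₀ d) ≠ 0)
    (s s' : Polynomial (ZMod (p ^ r))) (hs : redPoly p r hr s ≠ 0) (hs' : redPoly p r hr s' ≠ 0)
    (P P' : Matrix (Fin l) (Fin l) (Polynomial (ZMod (p ^ r))))
    (hP : s • H₀ = P * H) (hP' : s' • H = P' * H₀)
    (hmin : ∀ H' : Matrix (Fin l) (Fin n) (Polynomial (ZMod (p ^ r))),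
      FullRowRank H' → code H' = code H → intdeg H ≤ intdeg H') :
    gcdMinors (reduceMod p r hr H) ∣ gcdMinors (reduceMod p r hr H₀) := by
  have hH : FullRowRank H := (fullRowRank_iff p r hr H).2 ⟨d, hd⟩
  have hΔH : gcdMinors (reduceMod p r hr H) ≠ 0 :=
    gcdMinors_ne_zero _ d (by rw [minorOn_reduceMod]; exact hd)
  have hΔH0 : gcdMinors (reduceMod p r hr H₀) ≠ 0 :=
    gcdMinors_ne_zero _ d (by rw [minorOn_reduceMod]; exact hd0)
  rw [UniqueFactorizationMonoid.dvd_iff_emultiplicity_le hΔH]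
  intro f hf
  apply emultiplicity_le_emultiplicity_iff.2
  intro i hi
  -- split the relation scalar into its `f`-part and its prime-to-`f` part
  have hss : redPoly p r hr (s * s') ≠ 0 := by rw [map_mul]; exact mul_ne_zero hs hs'
  obtain ⟨c, hc, hfc⟩ :=
    (FiniteMultiplicity.of_prime_left hf hss).exists_eq_pow_mul_and_not_dvd
  set m := multiplicity f (redPoly p r hr (s * s'))
  obtain ⟨F, hF⟩ := redPoly_surjective p r hr f
  obtain ⟨E, hE⟩ := redPoly_surjective p r hr c
  have hc0 : c ≠ 0 := fun h => hfc (h ▸ dvd_zero _)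
  have hcop : IsCoprime f c := hf.irreducible.coprime_iff_not_dvd.2 hfc
  obtain ⟨u, hu⟩ := dvd_pow_of_red p r hr (s * s') (F ^ m * E) (by
    rw [hc, map_mul, map_pow, hF, hE])
  have hra : redPoly p r hr (F ^ (m * r)) = f ^ (m * r) := by rw [map_pow, hF]
  have hrb : redPoly p r hr (E ^ r) = c ^ r := by rw [map_pow, hE]
  have hab : IsCoprime (F ^ (m * r)) (E ^ r) :=
    (isCoprime_of_red p r hr F E (by rw [hF, hE]; exact hcop)).pow
  have hprod : F ^ (m * r) * E ^ r = s * s' * u := by rw [← hu, mul_pow, pow_mul]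
  have ha0 : redPoly p r hr (F ^ (m * r)) ≠ 0 := by rw [hra]; exact pow_ne_zero _ hf.ne_zero
  have hb0 : redPoly p r hr (E ^ r) ≠ 0 := by rw [hrb]; exact pow_ne_zero _ hc0
  obtain ⟨V, ⟨A, hA⟩, e, he, ⟨B, hB⟩, ⟨B', hB'⟩⟩ := glue p r hr H H₀ d hd (F ^ (m * r)) (E ^ r) hab
    ha0 hb0 ((s' * u) • P) ((s * u) • P')
    (by rw [hprod, Matrix.smul_mul, ← hP, smul_smul]; congr 1; ring)
    (by rw [hprod, Matrix.smul_mul, ← hP', smul_smul]; congr 1; ring)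
  have hBm : ∀ x, f ^ (m * r * l) * minorOn (reduceMod p r hr H) x
      = redPoly p r hr B.det * minorOn (reduceMod p r hr V) x := by
    intro x
    have := congrArg (fun M => redPoly p r hr (minorOn M x)) hB
    simp only [minorOn_smul, minorOn_mul, map_mul, map_pow, he, hF, one_pow, one_mul] at this
    rw [minorOn_reduceMod, minorOn_reduceMod, ← this, ← pow_mul]
  have hBm' : ∀ x, c ^ (r * l) * minorOn (reduceMod p r hr H₀) x
      = redPoly p r hr B'.det * minorOn (reduceMod p r hr V) x := by
    intro x
    have := congrArg (fun M => redPoly p r hr (minorOn M x)) hB'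
    simp only [minorOn_smul, minorOn_mul, map_mul, map_pow, he, hE, one_pow, one_mul] at this
    rw [minorOn_reduceMod, minorOn_reduceMod, ← this, ← pow_mul]
  have hVd : redPoly p r hr (minorOn V d) ≠ 0 := by
    intro h0
    have := hBm d
    rw [minorOn_reduceMod, minorOn_reduceMod, h0, mul_zero] at this
    exact mul_ne_zero (pow_ne_zero _ hf.ne_zero) hd this
  have hVfull : FullRowRank V := (fullRowRank_iff p r hr V).2 ⟨d, hVd⟩
  have hcode : code V = code H := by
    refine code_eq_of_relation p r hr V H (F ^ (m * r)) (e * F ^ (m * r)) ha0 ?_ A B hA ?_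
    · rw [map_mul, he, one_mul]; exact ha0
    · rw [← hB, smul_smul]
  have hdeg := natDegree_gcd_le_of_min p r hr hl H V hH hVfull hcode hmin
  have hΔV : gcdMinors (reduceMod p r hr V) ≠ 0 :=
    gcdMinors_ne_zero _ d (by rw [minorOn_reduceMod]; exact hVd)
  have hdv : gcdMinors (reduceMod p r hr V) ∣ f ^ (m * r * l) * gcdMinors (reduceMod p r hr H) :=
    (Dvd.intro_left _ rfl).trans (gcdMinors_assoc _ _ _ _ hBm).symm.dvd
  have hdv' : gcdMinors (reduceMod p r hr V) ∣ c ^ (r * l) * gcdMinors (reduceMod p r hr H₀) :=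
    (Dvd.intro_left _ rfl).trans (gcdMinors_assoc _ _ _ _ hBm').symm.dvd
  have h1 := pow_dvd_of_degree f _ _ _ hf hΔH hΔV (m * r * l) i rfl hdv hdeg hi
  exact (hcop.pow (m := i) (n := r * l)).dvd_of_dvd_mul_left (h1.trans hdv')

theorem gcdMinors_dvd_dual (p r : ℕ) [Fact p.Prime] (hr : r ≠ 0) {k l n : ℕ} (hkl : k + l = n)
    (G : Matrix (Fin k) (Fin n) (Polynomial (ZMod (p ^ r))))
    (H : Matrix (Fin l) (Fin n) (Polynomial (ZMod (p ^ r))))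
    (hG : FullRowRank G) (hH : FullRowRank H) (hGH : G * Hᵀ = 0)
    (hmin : ∀ H' : Matrix (Fin l) (Fin n) (Polynomial (ZMod (p ^ r))),
      FullRowRank H' → code H' = code H → intdeg H ≤ intdeg H') :
    gcdMinors (reduceMod p r hr H) ∣ gcdMinors (reduceMod p r hr G) := by
  by_cases hl : l = 0
  · subst hl
    have h1 : gcdMinors (reduceMod p r hr H) ∣ 1 := by
      have := Finset.gcd_dvd (f := fun c => minorOn (reduceMod p r hr H) c)
        (Finset.mem_univ (Fin.elim0 : Fin 0 → Fin n))
      have h2 : minorOn (reduceMod p r hr H) (Fin.elim0 : Fin 0 → Fin n) = 1 := by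
        unfold minorOn; exact Matrix.det_isEmpty
      rw [h2] at this
      exact this
    exact h1.trans (one_dvd _)
  · obtain ⟨H₀, hGH₀, hH₀, hdvd⟩ := exists_good_dual p r hr hkl G hG
    refine dvd_trans ?_ hdvd
    obtain ⟨c, hc⟩ := (fullRowRank_iff p r hr G).1 hG
    have hcinj : Function.Injective c := by
      by_contra hn
      rw [minorOn_eq_zero_of_not_injective G c hn, map_zero] at hc
      exact hc rfl
    obtain ⟨e, he⟩ := exists_equiv_of_injective hkl c hcinj
    have hec : e ∘ Sum.inl = c := funext he
    rw [← hec] at hc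
    have h1 := red_minor_ne_zero p r hr hkl G H hGH hH e hc
    have h2 := red_minor_ne_zero p r hr hkl G H₀ hGH₀ hH₀ e hc
    have hreg := (mem_nonZeroDivisors_iff_red p r hr _).2 hc
    exact gcdMinors_dvd_of_min p r hr hl H H₀ (e ∘ Sum.inr) h1 h2 _ _ h1 h2 _ _
      (relation_of_orthogonal G H H₀ e hreg hGH hGH₀)
      (relation_of_orthogonal G H₀ H e hreg hGH₀ hGH) hmin

theorem mul_transpose_eq_zero_of_dual {R : Type*} [CommRing R] {k l n : ℕ}
    (G : Matrix (Fin k) (Fin n) (Polynomial R)) (H : Matrix (Fin l) (Fin n) (Polynomial R))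
    (hdual : code H = dualCode (code G)) : G * Hᵀ = 0 := by
  ext1 i j
  apply polyToLS_injective R
  have h1 : (fun x => polyToLS R (H j x)) ∈ dualCode (code G) := hdual ▸ row_mem_code H j
  have h2 := h1 _ (row_mem_code G i)
  rw [Matrix.mul_apply, map_sum, Matrix.zero_apply, map_zero, ← h2]
  refine Finset.sum_congr rfl (fun x _ => ?_)
  rw [map_mul, mul_comm]
  rfl


/-- Duality theorem: the Residual Structural Polynomial of a free convolutional code
equals that of its dual code, computed from RIDM encoders `G` of `C` and `H` of `C⊥`. -/
theorem residual_structural_polynomial_dual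
    (p : ℕ) [Fact p.Prime] (r : ℕ) (hr : r ≠ 0) (k n : ℕ) (hk : k ≤ n)
    (G : Matrix (Fin k) (Fin n) (Polynomial (ZMod (p ^ r))))
    (H : Matrix (Fin (n - k)) (Fin n) (Polynomial (ZMod (p ^ r))))
    (hG : FullRowRank G)
    (hGmin : ∀ G' : Matrix (Fin k) (Fin n) (Polynomial (ZMod (p ^ r))),
      FullRowRank G' → code G' = code G → intdeg G ≤ intdeg G')
    (hH : FullRowRank H)
    (hdual : code H = dualCode (code G))
    (hHmin : ∀ H' : Matrix (Fin (n - k)) (Fin n) (Polynomial (ZMod (p ^ r))),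
      FullRowRank H' → code H' = code H → intdeg H ≤ intdeg H') :
    gcdMinors (reduceMod p r hr G) = gcdMinors (reduceMod p r hr H) := by
  have hGH := mul_transpose_eq_zero_of_dual G H hdual
  have hHG : H * Gᵀ = 0 := by
    have := congrArg Matrix.transpose hGH
    rwa [Matrix.transpose_mul, Matrix.transpose_transpose, Matrix.transpose_zero] at this
  refine dvd_antisymm_of_normalize_eq Finset.normalize_gcd Finset.normalize_gcd ?_ ?_
  · exact gcdMinors_dvd_dual p r hr (by omega) H G hH hG hHG hGmin
  · exact gcdMinors_dvd_dual p r hr (by omega) G H hG hH hGH hHmin
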